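/- Let σ be a signature, k ≥ 1, and let 𝐀, 𝐀', 𝐁 be σ-structures with 𝐀 ≡_k 𝐀'. Then SA^k(𝐀,𝐁) is feasible if and only if SA^k(𝐀',𝐁) is feasible. -/

import Mathlib

attribute [local instance] Classical.propDecidable

set_option maxHeartbeats 1000000

noncomputable section

/-- A relational structure over the signature given by symbols `σ` with arities `ar`,
with universe `A`: for each relation symbol, a set of tuples. -/
structure Struct (σ : Type) (ar : σ → ℕ) (A : Type) : Type where
  rel : ∀ R : σ, Set (Fin (ar R) → A)

variable {σ : Type} {ar : σ → ℕ}

/-- The set of constraints of a structure: pairs `(R, 𝐚)` with `𝐚 ∈ R(AA)`. -/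
def Cons {A : Type} (AA : Struct σ ar A) : Type :=
  Σ R : σ, {u : Fin (ar R) → A // u ∈ AA.rel R}

instance Cons.finite {A : Type} [Finite σ] [Finite A] {AA : Struct σ ar A} :
    Finite (Cons AA) :=
  inferInstanceAs (Finite (Σ R : σ, {u : Fin (ar R) → A // u ∈ AA.rel R}))

noncomputable instance Cons.fintype {A : Type} [Fintype σ] [Fintype A] {AA : Struct σ ar A} :
    Fintype (Cons AA) := Fintype.ofFinite _

/-- Labels `(S, R)` with `R ∈ σ` and `S ⊆ [arity R]`. -/
abbrev Label (σ : Type) (ar : σ → ℕ) : Type := Σ R : σ, Finset (Fin (ar R))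

/-- The entry of the matrix representation `M_AA` of a structure at `(a, R(𝐚))`:
the label `(S, R)` with `S = {i : 𝐚[i] = a}`. -/
def lab {A : Type} (AA : Struct σ ar A) (a : A) (c : Cons AA) : Label σ ar :=
  ⟨c.1, Finset.univ.filter fun i => c.2.1 i = a⟩

/-- The 0/1 matrix `M_AA^ℓ`. -/
def labMat {A : Type} (AA : Struct σ ar A) (ℓ : Label σ ar) : Matrix A (Cons AA) ℝ :=
  fun a c => if lab AA a c = ℓ then 1 else 0

/-- A doubly stochastic matrix: non-negative entries, all rows and all columns sum to 1. -/
def IsDoublyStochastic {α β : Type} [Fintype α] [Fintype β] (X : Matrix α β ℝ) : Prop :=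
  (∀ i j, 0 ≤ X i j) ∧ (∀ i, ∑ j, X i j = 1) ∧ (∀ j, ∑ i, X i j = 1)

/-- A left stochastic matrix: non-negative entries, all columns sum to 1. -/
def IsLeftStochastic {α β : Type} [Fintype α] (X : Matrix α β ℝ) : Prop :=
  (∀ i j, 0 ≤ X i j) ∧ (∀ j, ∑ i, X i j = 1)

/-- Fractional isomorphism: doubly stochastic `X`, `Y` with
`X M_AA^ℓ = M_BB^ℓ Y` and `M_AA^ℓ Yᵀ = Xᵀ M_BB^ℓ` for every label `ℓ`. -/
def FracIso {A B : Type} [Fintype σ] [Fintype A] [Fintype B]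
    (AA : Struct σ ar A) (BB : Struct σ ar B) : Prop :=
  ∃ (X : Matrix B A ℝ) (Y : Matrix (Cons BB) (Cons AA) ℝ),
    IsDoublyStochastic X ∧ IsDoublyStochastic Y ∧
    ∀ ℓ : Label σ ar,
      X * labMat AA ℓ = labMat BB ℓ * Y ∧
      labMat AA ℓ * Y.transpose = X.transpose * labMat BB ℓ

/-- The type of iterated degrees of depth `k`. -/
def DegT (L : Type) : ℕ → Type
  | 0 => Bool
  | k + 1 => Multiset (L × DegT L k)

/-- The iterated degree `δ_k` of an element or a constraint of a structure. -/
def iterDeg {A : Type} [Fintype σ] [Fintype A] (AA : Struct σ ar A) :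
    (k : ℕ) → A ⊕ Cons AA → DegT (Label σ ar) k
  | 0, x => x.isLeft
  | k + 1, Sum.inl a =>
      (Finset.univ.val.map fun c : Cons AA => (lab AA a c, iterDeg AA k (Sum.inr c)) :
        Multiset (Label σ ar × DegT (Label σ ar) k))
  | k + 1, Sum.inr c =>
      (Finset.univ.val.map fun a : A => (lab AA a c, iterDeg AA k (Sum.inl a)) :
        Multiset (Label σ ar × DegT (Label σ ar) k))

/-- Two structures have the same iterated degree sequence. -/
def SameIterDeg {A B : Type} [Fintype σ] [Fintype A] [Fintype B]
    (AA : Struct σ ar A) (BB : Struct σ ar B) : Prop :=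
  ∀ k : ℕ,
    Multiset.map (iterDeg AA k) (Finset.univ.val : Multiset (A ⊕ Cons AA)) =
    Multiset.map (iterDeg BB k) (Finset.univ.val : Multiset (B ⊕ Cons BB))
/-- An equitable partition of a structure, given by index maps `p` (on the universe)
and `q` (on the constraints) together with its parameters `cpar`, `dpar`. -/
def IsEquitable {A : Type} (AA : Struct σ ar A) {I : Type u} {J : Type v}
    (p : A → I) (q : Cons AA → J)
    (cpar : Label σ ar → I → J → ℕ) (dpar : Label σ ar → J → I → ℕ) : Prop :=
  (∀ (a : A) (ℓ : Label σ ar) (j : J),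
      Nat.card {c : Cons AA // q c = j ∧ lab AA a c = ℓ} = cpar ℓ (p a) j) ∧
  (∀ (c : Cons AA) (ℓ : Label σ ar) (i : I),
      Nat.card {a : A // p a = i ∧ lab AA a c = ℓ} = dpar ℓ (q c) i)

/-- Two structures have a common equitable partition: equitable partitions with the same
index sets, the same parameters, and corresponding classes of equal sizes. -/
def CommonEquitable {A B : Type} (AA : Struct σ ar A) (BB : Struct σ ar B) : Prop :=
  ∃ (I J : Type) (pA : A → I) (qA : Cons AA → J) (pB : B → I) (qB : Cons BB → J)
    (cpar : Label σ ar → I → J → ℕ) (dpar : Label σ ar → J → I → ℕ),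
    IsEquitable AA pA qA cpar dpar ∧ IsEquitable BB pB qB cpar dpar ∧
    (∀ i : I, Nat.card {a : A // pA a = i} = Nat.card {b : B // pB b = i}) ∧
    (∀ j : J, Nat.card {c : Cons AA // qA c = j} = Nat.card {c : Cons BB // qB c = j})

/-- `h` is a homomorphism from `AA` to `BB`. -/
def IsHom {A B : Type} (AA : Struct σ ar A) (BB : Struct σ ar B) (h : A → B) : Prop :=
  ∀ (R : σ) (u : Fin (ar R) → A), u ∈ AA.rel R → (fun i => h (u i)) ∈ BB.rel R

/-- The number of homomorphisms from `AA` to `BB`. -/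
def homCount {A B : Type} (AA : Struct σ ar A) (BB : Struct σ ar B) : ℕ :=
  Nat.card {h : A → B // IsHom AA BB h}

/-- The number of homomorphisms from `(TT, t)` to `(DD, d)` (with a designated element). -/
def rhomCount {T D : Type} (TT : Struct σ ar T) (t : T) (DD : Struct σ ar D) (d : D) : ℕ :=
  Nat.card {h : T → D // IsHom TT DD h ∧ h t = d}

/-- The factor graph of a structure: bipartite graph on elements and constraints. -/
def factorGraph {A : Type} (AA : Struct σ ar A) : SimpleGraph (A ⊕ Cons AA) :=
  SimpleGraph.fromRel fun x y =>
    ∃ (a : A) (c : Cons AA), x = Sum.inl a ∧ y = Sum.inr c ∧ ∃ i, c.2.1 i = a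

/-- A structure is an ftree if its factor graph is a tree. -/
def IsFtree {A : Type} (AA : Struct σ ar A) : Prop := (factorGraph AA).IsTree
/-- The set `{𝐚}` of elements occurring in the tuple of a constraint, as a Finset. -/
def tsupp {A : Type} {AA : Struct σ ar A} (c : Cons AA) : Finset A :=
  Finset.univ.image c.2.1

lemma mem_tsupp {A : Type} {AA : Struct σ ar A} (c : Cons AA) (i : Fin (ar c.1)) :
    c.2.1 i ∈ tsupp c :=
  Finset.mem_image_of_mem _ (Finset.mem_univ i)

/-- Feasibility of the system `SA^k(AA, BB)`. -/
def SAfeasible {A B : Type} [Fintype B] (k : ℕ)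
    (AA : Struct σ ar A) (BB : Struct σ ar B) : Prop :=
  ∃ (pV : (V : Finset A) → ({x // x ∈ V} → B) → ℝ)
    (pC : (c : Cons AA) → ({x // x ∈ tsupp c} → B) → ℝ),
    -- all variables take values in [0,1]
    (∀ (V : Finset A) (f : {x // x ∈ V} → B),
        V.Nonempty → V.card ≤ k → 0 ≤ pV V f ∧ pV V f ≤ 1) ∧
    (∀ (c : Cons AA) (f : {x // x ∈ tsupp c} → B), 0 ≤ pC c f ∧ pC c f ≤ 1) ∧
    -- (SA1)
    (∀ V : Finset A, V.Nonempty → V.card ≤ k →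
        ∑ f : {x // x ∈ V} → B, pV V f = 1) ∧
    -- (SA2)
    (∀ (U V : Finset A) (hUV : U ⊆ V), U.Nonempty → V.card ≤ k →
        ∀ f : {x // x ∈ U} → B,
          pV U f = ∑ g : {x // x ∈ V} → B,
            if ∀ u : {x // x ∈ U}, g ⟨u.1, hUV u.2⟩ = f u then pV V g else 0) ∧
    -- (SA3)
    (∀ (c : Cons AA) (U : Finset A) (hU : U ⊆ tsupp c), U.Nonempty → U.card ≤ k →
        ∀ f : {x // x ∈ U} → B,
          pV U f = ∑ g : {x // x ∈ tsupp c} → B,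
            if ∀ u : {x // x ∈ U}, g ⟨u.1, hU u.2⟩ = f u then pC c g else 0) ∧
    -- (SA4)
    (∀ (c : Cons AA) (f : {x // x ∈ tsupp c} → B),
        (fun i => f ⟨c.2.1 i, mem_tsupp c i⟩) ∉ BB.rel c.1 → pC c f = 0)

/-- The relation symbols of the signature `σ*_k`. -/
inductive StarSym (σ : Type) (ar : σ → ℕ) (k : ℕ) : Type
  | TS (j : Fin k) (S : Finset (Fin (j.1 + 1)))
  | TI (j j' : Fin k) (iv : Fin (j'.1 + 1) → Fin (j.1 + 1))
  | RS (R : σ) (S : Finset (Fin (ar R)))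
  | RI (R : σ) (j : Fin k) (iv : Fin (j.1 + 1) → Fin (ar R))

/-- Arities for `σ*_k`. -/
def starAr {k : ℕ} : StarSym σ ar k → ℕ
  | .TS _ _ => 1
  | .TI _ _ _ => 2
  | .RS _ _ => 1
  | .RI _ _ _ => 2

/-- The universe of `AA*_k`: all tuples of length `1 ≤ j ≤ k` together with the constraints. -/
def StarUniv {A : Type} (AA : Struct σ ar A) (k : ℕ) : Type :=
  ((j : Fin k) × (Fin (j.1 + 1) → A)) ⊕ Cons AA

instance StarUniv.finite {A : Type} [Finite σ] [Finite A] {AA : Struct σ ar A} {k : ℕ} :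
    Finite (StarUniv AA k) :=
  inferInstanceAs (Finite (((j : Fin k) × (Fin (j.1 + 1) → A)) ⊕ Cons AA))

noncomputable instance StarUniv.fintype {A : Type} [Fintype σ] [Fintype A]
    {AA : Struct σ ar A} {k : ℕ} : Fintype (StarUniv AA k) := Fintype.ofFinite _

/-- The structure `AA*_k`. -/
def starStruct {A : Type} (AA : Struct σ ar A) (k : ℕ) :
    Struct (StarSym σ ar k) starAr (StarUniv AA k) where
  rel
    | .TS j S => {u | ∃ v : Fin (j.1 + 1) → A,
        (∀ i ∈ S, ∀ i' ∈ S, v i = v i') ∧ u = fun _ => Sum.inl ⟨j, v⟩}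
    | .TI j j' iv => {u | ∃ v : Fin (j.1 + 1) → A,
        u = ![Sum.inl ⟨j, v⟩, Sum.inl ⟨j', v ∘ iv⟩]}
    | .RS R S => {u | ∃ (v : Fin (ar R) → A) (hv : v ∈ AA.rel R),
        (∀ i ∈ S, ∀ i' ∈ S, v i = v i') ∧ u = fun _ => Sum.inr ⟨R, ⟨v, hv⟩⟩}
    | .RI R j iv => {u | ∃ (v : Fin (ar R) → A) (hv : v ∈ AA.rel R),
        u = ![Sum.inr ⟨R, ⟨v, hv⟩⟩, Sum.inl ⟨j, v ∘ iv⟩]}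

/-- `AA ≡_k BB` : the structures `AA*_k` and `BB*_k` have a common equitable partition. -/
def EquivK {A B : Type} (k : ℕ) (AA : Struct σ ar A) (BB : Struct σ ar B) : Prop :=
  CommonEquitable (starStruct AA k) (starStruct BB k)

/-- A bundled σ-structure with finite universe. -/
structure FinStruct (σ : Type) (ar : σ → ℕ) : Type 1 where
  carrier : Type
  [fin : Fintype carrier]
  str : Struct σ ar carrier

/-- One step in a chain: either a homomorphism exists, or the structures are
`≡_1`-equivalent (i.e. have a common equitable partition). -/
def FStep (X Y : FinStruct σ ar) : Prop :=
  (∃ h : X.carrier → Y.carrier, IsHom X.str Y.str h) ∨ CommonEquitable X.str Y.str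

/-- The structure `AA` has treewidth `< k`: there is a tree-decomposition all of whose
bags have at most `k` elements. -/
def HasTreewidthLT {A : Type} (AA : Struct σ ar A) (k : ℕ) : Prop :=
  ∃ (V : Type) (G : SimpleGraph V) (β : V → Finset A),
    G.IsTree ∧
    (∀ c : Cons AA, ∃ v : V, ∀ i, c.2.1 i ∈ β v) ∧
    (∀ (a : A) (u v : V), a ∈ β u → a ∈ β v →
      ∀ p : G.Walk u v, p.IsPath → ∀ w ∈ p.support, a ∈ β w) ∧
    (∀ v : V, (β v).card ≤ k)
/-- The adjacency matrix of a graph (a structure with one binary relation). -/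
def adjMat {A : Type} (AA : Struct Unit (fun _ => 2) A) : Matrix A A ℝ :=
  fun a a' => if ![a, a'] ∈ AA.rel () then 1 else 0

/-- A matrix is decomposable if, up to partitioning rows and columns into two
(nontrivial) blocks, it is a direct sum. -/
def MDecomposable {V W : Type} (M : Matrix V W ℝ) : Prop :=
  ∃ (SV : Set V) (SW : Set W),
    (SV.Nonempty ∨ SW.Nonempty) ∧ (SVᶜ.Nonempty ∨ SWᶜ.Nonempty) ∧
    ∀ v w, (v ∈ SV ∧ w ∉ SW) ∨ (v ∉ SV ∧ w ∈ SW) → M v w = 0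

/-- A bundled rooted ftree. -/
structure RootedFtree (σ : Type) (ar : σ → ℕ) : Type 1 where
  carrier : Type
  [fin : Fintype carrier]
  str : Struct σ ar carrier
  isFtree : IsFtree str
  root : carrier

/-- The profile of an element: the number of homomorphisms from each rooted ftree
mapping the root to it. -/
def degProfile {D : Type} (DD : Struct σ ar D) (d : D) : RootedFtree σ ar → ℕ :=
  fun F => rhomCount F.str F.root DD d

/-- The class of a constraint: its relation symbol, its equality pattern, and the
`degProfile`-classes of its coordinates. -/
def qProfile {D : Type} (DD : Struct σ ar D) (c : Cons DD) :
    Σ R : σ, Set (Fin (ar R) × Fin (ar R)) × (Fin (ar R) → (RootedFtree σ ar → ℕ)) :=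
  ⟨c.1, ({p | c.2.1 p.1 = c.2.1 p.2}, fun s => degProfile DD (c.2.1 s))⟩

/-- Number of homomorphisms with a designated element and a designated constraint. -/
def rhomCount2 {T D : Type} (TT : Struct σ ar T) (t : T) (c : Cons TT)
    (DD : Struct σ ar D) (d : D) (c' : Cons DD) : ℕ :=
  Nat.card {h : T → D // IsHom TT DD h ∧ h t = d ∧
    (⟨c.1, fun i => h (c.2.1 i)⟩ : Σ R : σ, Fin (ar R) → D) = ⟨c'.1, c'.2.1⟩}

/-- `(t, R(𝐭))` can be mapped to `(d, R'(𝐝))`. -/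
def CanMap {T D : Type} {TT : Struct σ ar T} {DD : Struct σ ar D}
    (t : T) (c : Cons TT) (d : D) (c' : Cons DD) : Prop :=
  ∃ hR : c.1 = c'.1,
    (∀ s s' : Fin (ar c.1), c.2.1 s = c.2.1 s' →
        c'.2.1 (Fin.cast (congrArg ar hR) s) = c'.2.1 (Fin.cast (congrArg ar hR) s')) ∧
    (∀ s : Fin (ar c.1), c.2.1 s = t → c'.2.1 (Fin.cast (congrArg ar hR) s) = d)

/-- A substructure of a structure: a subset of the universe together with a subset of
the tuples of each relation, lying inside the subset. -/
structure Substr {A : Type} (AA : Struct σ ar A) : Type where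
  carrier : Set A
  srel : ∀ R : σ, Set (Fin (ar R) → A)
  srel_sub : ∀ R : σ, srel R ⊆ AA.rel R
  srel_mem : ∀ R : σ, ∀ u ∈ srel R, ∀ i, u i ∈ carrier

/-- The substructure as a structure in its own right. -/
def Substr.toStruct {A : Type} {AA : Struct σ ar A} (Q : Substr AA) :
    Struct σ ar {x // x ∈ Q.carrier} where
  rel R := {u | (fun i => (u i).1) ∈ Q.srel R}

/-- Containment of substructures. -/
def Substr.le {A : Type} {AA : Struct σ ar A} (Q Q' : Substr AA) : Prop :=
  Q.carrier ⊆ Q'.carrier ∧ ∀ R : σ, Q.srel R ⊆ Q'.srel R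

/-- A subftree of `TT` avoiding the constraint `c`, containing a unique element of the
tuple of `c`, which moreover participates in exactly one constraint of the subftree. -/
def GoodPiece {T : Type} (TT : Struct σ ar T) (c : Cons TT) (Q : Substr TT) : Prop :=
  IsFtree Q.toStruct ∧
  c.2.1 ∉ Q.srel c.1 ∧
  ∃ x ∈ Q.carrier, (∃ i, c.2.1 i = x) ∧
    (∀ y ∈ Q.carrier, (∃ i, c.2.1 i = y) → y = x) ∧
    (∃! e : Σ R : σ, {u // u ∈ Q.srel R}, ∃ i, e.2.1 i = x)

/-- The collection `TT \ c` of maximal subftrees as above. -/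
def TreeMinus {T : Type} (TT : Struct σ ar T) (c : Cons TT) : Set (Substr TT) :=
  {Q | GoodPiece TT c Q ∧ ∀ Q' : Substr TT, GoodPiece TT c Q' → Q.le Q' → Q'.le Q}

/-- The disjoint union of two structures. -/
def dUnion {A B : Type} (AA : Struct σ ar A) (BB : Struct σ ar B) :
    Struct σ ar (A ⊕ B) where
  rel R := {u | (∃ v ∈ AA.rel R, u = fun i => Sum.inl (v i)) ∨
                (∃ v ∈ BB.rel R, u = fun i => Sum.inr (v i))}

/-- Embedding of constraints of `AA` into constraints of the disjoint union. -/
def consInl {A B : Type} (AA : Struct σ ar A) (BB : Struct σ ar B) (c : Cons AA) :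
    Cons (dUnion AA BB) :=
  ⟨c.1, ⟨fun i => Sum.inl (c.2.1 i), Or.inl ⟨c.2.1, c.2.2, rfl⟩⟩⟩

/-- Embedding of constraints of `BB` into constraints of the disjoint union. -/
def consInr {A B : Type} (AA : Struct σ ar A) (BB : Struct σ ar B) (c : Cons BB) :
    Cons (dUnion AA BB) :=
  ⟨c.1, ⟨fun i => Sum.inr (c.2.1 i), Or.inr ⟨c.2.1, c.2.2, rfl⟩⟩⟩

/-- The stable-degree class of an element of the disjoint union: its full iterated
degree sequence. -/
def degPclass {A B : Type} [Fintype σ] [Fintype A] [Fintype B]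
    (AA : Struct σ ar A) (BB : Struct σ ar B) (x : A ⊕ B) :
    (k : ℕ) → DegT (Label σ ar) k :=
  fun k => iterDeg (dUnion AA BB) k (Sum.inl x)

/-- The stable-degree class of a constraint of the disjoint union. -/
def degQclass {A B : Type} [Fintype σ] [Fintype A] [Fintype B]
    (AA : Struct σ ar A) (BB : Struct σ ar B) (c : Cons (dUnion AA BB)) :
    (k : ℕ) → DegT (Label σ ar) k :=
  fun k => iterDeg (dUnion AA BB) k (Sum.inr c)
/-- The set `Y`: tuples in `(B × [m])^m` with no repeated entries, in which the copy
index of each entry is bounded by the number of occurrences of its `B`-component. -/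
def Ytype (B : Type) (m : ℕ) : Type :=
  {y : Fin m → B × Fin m // Function.Injective y ∧
    ∀ i, ((y i).2 : ℕ) + 1 ≤ Nat.card {j : Fin m // (y j).1 = (y i).1}}

/-- Permuting the coordinates of an element of `Y`. -/
def permY {B : Type} {m : ℕ} (τ : Equiv.Perm (Fin m)) (y : Ytype B m) : Ytype B m :=
  ⟨fun i => y.1 (τ i), y.2.1.comp τ.injective, fun i => by
    have h := y.2.2 (τ i)
    have hc : Nat.card {j : Fin m // (y.1 (τ j)).1 = (y.1 (τ i)).1}
        = Nat.card {j : Fin m // (y.1 j).1 = (y.1 (τ i)).1} :=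
      Nat.card_congr (τ.subtypeEquiv fun j => Iff.rfl)
    exact le_trans h (le_of_eq hc.symm)⟩

/-- The structure `X₁` from the proof of Theorem `thm:SA1`, built from a choice
function `choice` selecting a canonical element of `Y` for each multiset. -/
def X1struct {A B : Type} (AA : Struct σ ar A) (BB : Struct σ ar B) (m : ℕ)
    (choice : (Fin m → B) → Ytype B m) : Struct σ ar (A × Ytype B m) where
  rel R := {u | ∃ a : Fin (ar R) → A, a ∈ AA.rel R ∧
    ∃ tt : Fin m → Fin (ar R) → B,
      (∀ i, tt i ∈ BB.rel R) ∧
      (∀ i s s', a s = a s' → tt i s = tt i s') ∧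
      ∃ τ : Equiv.Perm (Fin m),
        u = fun s => (a s, permY τ (choice fun i => tt i s))}

/-! If `AA ≡_k AA'`, then `SA^k(AA, AA')` is itself feasible: send a set of elements, or a
constraint, of `AA` to a uniformly random point of the class of `AA'*_k` corresponding to it.
The unary relations of `AA*_k` make this point a map into `AA'`. The binary relations give the
marginal conditions: by equitability, each coordinate of a uniformly random tuple within a class
of constraints is uniform on its class of elements. Feasibility is transitive, since a random
assignment for `SA^k(AA, AA')` followed by one for `SA^k(AA', BB)` on its image is an assignment
for `SA^k(AA, BB)`; as `≡_k` is symmetric, this gives both implications. -/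

section Weights

variable {α β γ : Type*}

/-- The pushforward along `r` of the weight `w`, as for measures on a finite set: the marginal
conditions (SA2) and (SA3) are instances of it. -/
def pushforward [Fintype α] (r : α → β) (w : α → ℝ) (b : β) : ℝ :=
  ∑ a, if r a = b then w a else 0

/-- The mixture of the weights `κ a` with coefficients `w a`; it composes the solutions of two
Sherali–Adams systems. -/
def mixture [Fintype α] (w : α → ℝ) (κ : α → β → ℝ) (b : β) : ℝ :=
  ∑ a, w a * κ a b

/-- The law of `r` at a uniformly random point of `α`; the solution of `SA^k(AA, AA')` consists of
such laws. It is zero if `α` is empty or infinite. -/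
def law (r : α → β) (b : β) : ℝ :=
  Nat.card {a // r a = b} / Nat.card α

lemma pushforward_nonneg [Fintype α] {r : α → β} {w : α → ℝ} (hw : ∀ a, 0 ≤ w a) (b : β) :
    0 ≤ pushforward r w b :=
  Finset.sum_nonneg fun a _ => by split_ifs <;> simp [hw a]

lemma pushforward_eq_zero [Fintype α] {r : α → β} {w : α → ℝ} {b : β}
    (h : ∀ a, r a = b → w a = 0) : pushforward r w b = 0 :=
  Finset.sum_eq_zero fun a _ => ite_eq_right_iff.2 (h a)

lemma sum_pushforward [Fintype α] [Fintype β] (r : α → β) (w : α → ℝ) :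
    ∑ b, pushforward r w b = ∑ a, w a := by
  simp only [pushforward]
  rw [Finset.sum_comm]
  simp

lemma mixture_nonneg [Fintype α] {w : α → ℝ} {κ : α → β → ℝ} (hw : ∀ a, 0 ≤ w a)
    (hκ : ∀ a b, 0 ≤ κ a b) (b : β) : 0 ≤ mixture w κ b :=
  Finset.sum_nonneg fun a _ => mul_nonneg (hw a) (hκ a b)

lemma sum_mixture [Fintype α] [Fintype β] (w : α → ℝ) (κ : α → β → ℝ) :
    ∑ b, mixture w κ b = ∑ a, w a * ∑ b, κ a b := by
  simp only [mixture, Finset.mul_sum]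
  exact Finset.sum_comm

lemma mixture_congr [Fintype α] {w : α → ℝ} {κ κ' : α → β → ℝ}
    (h : ∀ a, w a ≠ 0 → κ a = κ' a) : mixture w κ = mixture w κ' := by
  funext b
  refine Finset.sum_congr rfl fun a _ => ?_
  by_cases ha : w a = 0
  · simp only [ha, zero_mul]
  · rw [h a ha]

lemma mixture_pushforward [Fintype α] [Fintype β] (r : α → β) (w : α → ℝ) (κ : β → γ → ℝ) :
    mixture (pushforward r w) κ = mixture w (κ ∘ r) := by
  funext c
  simp only [mixture, pushforward, Finset.sum_mul, ite_mul, zero_mul, Function.comp_apply]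
  rw [Finset.sum_comm]
  simp

lemma pushforward_mixture [Fintype α] [Fintype β] (r : β → γ) (w : α → ℝ) (κ : α → β → ℝ) :
    pushforward r (mixture w κ) = mixture w fun a => pushforward r (κ a) := by
  funext c
  simp only [mixture, pushforward, ← Finset.sum_filter, Finset.mul_sum]
  exact Finset.sum_comm

lemma pushforward_pushforward [Fintype α] [Fintype β] (s : β → γ) (r : α → β) (w : α → ℝ) :
    pushforward s (pushforward r w) = pushforward (s ∘ r) w := by
  funext c
  simp only [pushforward, ← Finset.sum_filter (fun b => s b = c)]
  rw [Finset.sum_comm]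
  simp [Finset.sum_ite_eq]

lemma law_nonneg (r : α → β) (b : β) : 0 ≤ law r b :=
  div_nonneg (Nat.cast_nonneg _) (Nat.cast_nonneg _)

lemma law_eq_zero {r : α → β} {b : β} (h : ∀ a, r a ≠ b) : law r b = 0 := by
  have : IsEmpty {a // r a = b} := Subtype.isEmpty_of_false h
  simp only [law, Nat.card_of_isEmpty, Nat.cast_zero, zero_div]

lemma law_eq_pushforward [Fintype α] (r : α → β) :
    law r = pushforward r fun _ => (Nat.card α : ℝ)⁻¹ := by
  funext b
  rw [law, pushforward, ← Finset.sum_filter, Finset.sum_const, nsmul_eq_mul,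
    Nat.card_eq_fintype_card (α := {a // r a = b}), Fintype.card_subtype, div_eq_mul_inv]

lemma sum_law [Finite α] [Fintype β] (r : α → β) :
    ∑ b, law r b = Nat.card α / Nat.card α := by
  cases nonempty_fintype α
  rw [law_eq_pushforward, sum_pushforward, Finset.sum_const, nsmul_eq_mul, Finset.card_univ,
    Nat.card_eq_fintype_card, div_eq_mul_inv]

lemma pushforward_law [Finite α] [Fintype β] (s : β → γ) (r : α → β) :
    pushforward s (law r) = law (s ∘ r) := by
  cases nonempty_fintype α
  rw [law_eq_pushforward, law_eq_pushforward, pushforward_pushforward]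

lemma card_subtype_comp_of_card_fiber [Finite α] [Finite β] {t : α → β} {m : ℕ}
    (ht : ∀ b, Nat.card {a // t a = b} = m) (p : β → Prop) :
    Nat.card {a // p (t a)} = Nat.card {b // p b} * m := by
  cases nonempty_fintype β
  rw [← Nat.card_congr (Equiv.sigmaSubtypeFiberEquivSubtype t (q := p) fun _ => Iff.rfl),
    Nat.card_sigma]
  simp only [ht, Finset.sum_const, Finset.card_univ, smul_eq_mul, Nat.card_eq_fintype_card]

lemma law_comp_of_card_fiber [Finite α] [Finite β] {t : α → β} {m : ℕ} (hm : m ≠ 0)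
    (ht : ∀ b, Nat.card {a // t a = b} = m) (r : β → γ) : law (r ∘ t) = law r := by
  have hcard : Nat.card α = Nat.card β * m := by
    simpa using card_subtype_comp_of_card_fiber ht fun _ => True
  funext c
  simp only [law, hcard, Function.comp_apply, card_subtype_comp_of_card_fiber ht (r · = c),
    Nat.cast_mul]
  exact mul_div_mul_right _ _ (Nat.cast_ne_zero.2 hm)

end Weights

section Constraints

variable {A : Type} {AA : Struct σ ar A} {R : σ}

/-- The constraint `R(u)`. -/
def Cons.mk {u : Fin (ar R) → A} (hu : u ∈ AA.rel R) : Cons AA :=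
  ⟨R, u, hu⟩

lemma Cons.mk_inj {u v : Fin (ar R) → A} {hu : u ∈ AA.rel R} {hv : v ∈ AA.rel R}
    (h : Cons.mk hu = Cons.mk hv) : u = v :=
  congrArg Subtype.val (eq_of_heq (Sigma.mk.inj h).2)

end Constraints

section SheraliAdams

variable {A B C : Type} {k : ℕ}

/-- Restriction of assignments on `V` to a subset `U`. -/
def restrictTo {U V : Finset A} (hUV : U ⊆ V) (g : {x // x ∈ V} → B) : {x // x ∈ U} → B :=
  fun u => g ⟨u.1, hUV u.2⟩

/-- A solution of `SA^k(AA, BB)`, with (SA2) and (SA3) phrased through `pushforward`. The bound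
`p ≤ 1` is replaced by bounds on total masses; a constraint of arity `0` may have mass below `1`. -/
structure IsSASolution [Fintype B] (k : ℕ) (AA : Struct σ ar A) (BB : Struct σ ar B)
    (pV : (V : Finset A) → ({x // x ∈ V} → B) → ℝ)
    (pC : (c : Cons AA) → ({x // x ∈ tsupp c} → B) → ℝ) : Prop where
  nonneg : ∀ V : Finset A, V.Nonempty → V.card ≤ k → ∀ f, 0 ≤ pV V f
  cons_nonneg : ∀ c f, 0 ≤ pC c f
  sum_eq_one : ∀ V : Finset A, V.Nonempty → V.card ≤ k → ∑ f, pV V f = 1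
  cons_sum_le_one : ∀ c, ∑ f, pC c f ≤ 1
  marginal : ∀ (U V : Finset A) (hUV : U ⊆ V), U.Nonempty → V.card ≤ k →
    pV U = pushforward (restrictTo hUV) (pV V)
  cons_marginal : ∀ (c : Cons AA) (U : Finset A) (hU : U ⊆ tsupp c), U.Nonempty → U.card ≤ k →
    pV U = pushforward (restrictTo hU) (pC c)
  cons_eq_zero : ∀ (c : Cons AA) (f : {x // x ∈ tsupp c} → B),
    (fun i => f ⟨c.2.1 i, mem_tsupp c i⟩) ∉ BB.rel c.1 → pC c f = 0

lemma pushforward_restrictTo_apply [Fintype B] {U V : Finset A} (hUV : U ⊆ V)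
    (w : ({x // x ∈ V} → B) → ℝ) (f : {x // x ∈ U} → B) :
    pushforward (restrictTo hUV) w f =
      ∑ g : {x // x ∈ V} → B, if ∀ u : {x // x ∈ U}, g ⟨u.1, hUV u.2⟩ = f u then w g else 0 := by
  simp only [pushforward, funext_iff, restrictTo]

lemma IsSASolution.feasible [Fintype B] {AA : Struct σ ar A} {BB : Struct σ ar B}
    {pV : (V : Finset A) → ({x // x ∈ V} → B) → ℝ}
    {pC : (c : Cons AA) → ({x // x ∈ tsupp c} → B) → ℝ} (h : IsSASolution k AA BB pV pC) :
    SAfeasible k AA BB := by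
  refine ⟨pV, pC, fun V f hV hVk => ⟨h.nonneg V hV hVk f, ?_⟩,
    fun c f => ⟨h.cons_nonneg c f, ?_⟩, h.sum_eq_one,
    fun U V hUV hU hVk f => ?_, fun c U hUc hU hUk f => ?_, h.cons_eq_zero⟩
  · rw [← h.sum_eq_one V hV hVk]
    exact Finset.single_le_sum (fun g _ => h.nonneg V hV hVk g) (Finset.mem_univ f)
  · exact (Finset.single_le_sum (fun g _ => h.cons_nonneg c g) (Finset.mem_univ f)).trans
      (h.cons_sum_le_one c)
  · rw [h.marginal U V hUV hU hVk, pushforward_restrictTo_apply]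
  · rw [h.cons_marginal c U hUc hU hUk, pushforward_restrictTo_apply]

lemma SAfeasible.exists_isSASolution [Fintype B] {AA : Struct σ ar A} {BB : Struct σ ar B}
    (hk : 1 ≤ k) (h : SAfeasible k AA BB) : ∃ pV pC, IsSASolution k AA BB pV pC := by
  obtain ⟨pV, pC, hV, hC, hsum, hmarg, hcmarg, hzero⟩ := h
  have cons_marginal : ∀ (c : Cons AA) (U : Finset A) (hU : U ⊆ tsupp c), U.Nonempty →
      U.card ≤ k → pV U = pushforward (restrictTo hU) (pC c) := by
    intro c U hUc hU hUk
    funext f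
    rw [pushforward_restrictTo_apply, hcmarg c U hUc hU hUk]
  refine ⟨pV, pC, fun V h₁ h₂ f => (hV V f h₁ h₂).1, fun c f => (hC c f).1, hsum, fun c => ?_,
    fun U V hUV hU hVk => ?_, cons_marginal, hzero⟩
  · obtain hc | ⟨a, ha⟩ := (tsupp c).eq_empty_or_nonempty
    · have : IsEmpty {x // x ∈ tsupp c} := Finset.isEmpty_coe_sort.2 hc
      rw [Fintype.sum_unique]
      exact (hC c _).2
    · rw [← sum_pushforward (restrictTo (Finset.singleton_subset_iff.2 ha)),
        ← cons_marginal c {a} _ (Finset.singleton_nonempty a) (by simpa using hk)]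
      exact (hsum {a} (Finset.singleton_nonempty a) (by simpa using hk)).le
  · funext f
    rw [pushforward_restrictTo_apply, hmarg U V hUV hU hVk]

/-- Precomposition of assignments on `W` with a map `φ` into `W`. -/
def pullAssignment {S : Type} {W : Finset B} {φ : S → B} (hφ : ∀ s, φ s ∈ W)
    (g : {x // x ∈ W} → C) : S → C :=
  fun s => g ⟨φ s, hφ s⟩

/-- The weight on assignments `V → C` induced by a map `φ : V → B` from the weight that `pV`
gives to assignments on its image. -/
def pullWeight [Fintype C] {V : Finset A} (pV : (W : Finset B) → ({x // x ∈ W} → C) → ℝ)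
    (φ : {x // x ∈ V} → B) : ({x // x ∈ V} → C) → ℝ :=
  pushforward (pullAssignment fun v => Finset.mem_image_of_mem φ (Finset.mem_univ v))
    (pV (Finset.univ.image φ))

lemma apply_mem_tsupp_mk {AA : Struct σ ar A} {BB : Struct σ ar B} {c : Cons AA}
    {φ : {x // x ∈ tsupp c} → B} (h : (fun i => φ ⟨c.2.1 i, mem_tsupp c i⟩) ∈ BB.rel c.1)
    (a : {x // x ∈ tsupp c}) : φ a ∈ tsupp (Cons.mk h) := by
  obtain ⟨a, ha⟩ := a
  obtain ⟨i, -, rfl⟩ := Finset.mem_image.1 ha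
  exact mem_tsupp (Cons.mk h) i

/-- The weight on assignments of the constraint `c` induced by a map `φ` on its elements from the
weight that `pC` gives to the image constraint; zero if the image is not a constraint. -/
def pullConsWeight [Fintype C] {AA : Struct σ ar A} {BB : Struct σ ar B} (c : Cons AA)
    (pC : (d : Cons BB) → ({x // x ∈ tsupp d} → C) → ℝ) (φ : {x // x ∈ tsupp c} → B) :
    ({x // x ∈ tsupp c} → C) → ℝ :=
  if h : (fun i => φ ⟨c.2.1 i, mem_tsupp c i⟩) ∈ BB.rel c.1 then
    pushforward (pullAssignment (apply_mem_tsupp_mk h)) (pC (Cons.mk h))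
  else 0

lemma image_nonempty_and_card_le {V : Finset A} (hV : V.Nonempty) (hVk : V.card ≤ k)
    (φ : {x // x ∈ V} → B) :
    (Finset.univ.image φ).Nonempty ∧ (Finset.univ.image φ).card ≤ k := by
  refine ⟨?_, Finset.card_image_le.trans (by simpa using hVk)⟩
  simpa [Finset.univ_nonempty_iff] using hV

section Pull

variable [Fintype C] {AA : Struct σ ar A} {BB : Struct σ ar B} {CC : Struct σ ar C}
  {pV : (W : Finset B) → ({x // x ∈ W} → C) → ℝ}
  {pC : (d : Cons BB) → ({x // x ∈ tsupp d} → C) → ℝ}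

lemma IsSASolution.pullWeight_nonneg (h : IsSASolution k BB CC pV pC) {V : Finset A}
    (hV : V.Nonempty) (hVk : V.card ≤ k) (φ : {x // x ∈ V} → B) (f : {x // x ∈ V} → C) :
    0 ≤ pullWeight pV φ f :=
  have ⟨hne, hle⟩ := image_nonempty_and_card_le hV hVk φ
  pushforward_nonneg (h.nonneg _ hne hle) f

lemma IsSASolution.sum_pullWeight (h : IsSASolution k BB CC pV pC) {V : Finset A}
    (hV : V.Nonempty) (hVk : V.card ≤ k) (φ : {x // x ∈ V} → B) : ∑ f, pullWeight pV φ f = 1 :=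
  have ⟨hne, hle⟩ := image_nonempty_and_card_le hV hVk φ
  (sum_pushforward _ _).trans (h.sum_eq_one _ hne hle)

lemma IsSASolution.pullWeight_restrictTo (h : IsSASolution k BB CC pV pC) {U V : Finset A}
    (hUV : U ⊆ V) (hU : U.Nonempty) (hVk : V.card ≤ k) (φ : {x // x ∈ V} → B) :
    pullWeight pV (restrictTo hUV φ) =
      pushforward (restrictTo hUV) (pullWeight pV φ) := by
  have hsub : Finset.univ.image (restrictTo hUV φ) ⊆ Finset.univ.image φ :=
    Finset.image_subset_iff.2 fun u _ => Finset.mem_image_of_mem φ (Finset.mem_univ _)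
  have ⟨hne, _⟩ := image_nonempty_and_card_le hU ((Finset.card_le_card hUV).trans hVk)
    (restrictTo hUV φ)
  have ⟨_, hle⟩ := image_nonempty_and_card_le (hU.mono hUV) hVk φ
  rw [pullWeight, h.marginal _ _ hsub hne hle, pullWeight, pushforward_pushforward,
    pushforward_pushforward]
  rfl

lemma IsSASolution.pullConsWeight_nonneg (h : IsSASolution k BB CC pV pC) (c : Cons AA)
    (φ : {x // x ∈ tsupp c} → B) (f : {x // x ∈ tsupp c} → C) : 0 ≤ pullConsWeight c pC φ f := by
  rw [pullConsWeight]
  split_ifs with hφ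
  · exact pushforward_nonneg (h.cons_nonneg _) f
  · exact le_rfl

lemma IsSASolution.sum_pullConsWeight_le_one (h : IsSASolution k BB CC pV pC) (c : Cons AA)
    (φ : {x // x ∈ tsupp c} → B) : ∑ f, pullConsWeight c pC φ f ≤ 1 := by
  rw [pullConsWeight]
  split_ifs with hφ
  · exact (sum_pushforward _ _).trans_le (h.cons_sum_le_one _)
  · simp

lemma IsSASolution.pullWeight_restrictTo_tsupp (h : IsSASolution k BB CC pV pC) {c : Cons AA}
    {U : Finset A} (hUc : U ⊆ tsupp c) (hU : U.Nonempty) (hUk : U.card ≤ k)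
    {φ : {x // x ∈ tsupp c} → B} (hφ : (fun i => φ ⟨c.2.1 i, mem_tsupp c i⟩) ∈ BB.rel c.1) :
    pullWeight pV (restrictTo hUc φ) =
      pushforward (restrictTo hUc) (pullConsWeight c pC φ) := by
  have hsub : Finset.univ.image (restrictTo hUc φ) ⊆ tsupp (Cons.mk hφ) :=
    Finset.image_subset_iff.2 fun u _ => apply_mem_tsupp_mk hφ _
  have ⟨hne, hle⟩ := image_nonempty_and_card_le hU hUk (restrictTo hUc φ)
  rw [pullWeight, h.cons_marginal _ _ hsub hne hle, pullConsWeight, dif_pos hφ,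
    pushforward_pushforward, pushforward_pushforward]
  rfl

lemma IsSASolution.pullConsWeight_eq_zero (h : IsSASolution k BB CC pV pC) {c : Cons AA}
    {f : {x // x ∈ tsupp c} → C} (hf : (fun i => f ⟨c.2.1 i, mem_tsupp c i⟩) ∉ CC.rel c.1)
    (φ : {x // x ∈ tsupp c} → B) : pullConsWeight c pC φ f = 0 := by
  rw [pullConsWeight]
  split_ifs with hφ
  · refine pushforward_eq_zero fun g hg => h.cons_eq_zero _ g ?_
    subst hg
    exact hf
  · rfl

end Pull

theorem IsSASolution.comp [Fintype B] [Fintype C]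
    {AA : Struct σ ar A} {BB : Struct σ ar B} {CC : Struct σ ar C}
    {pV : (V : Finset A) → ({x // x ∈ V} → B) → ℝ}
    {pC : (c : Cons AA) → ({x // x ∈ tsupp c} → B) → ℝ}
    {rV : (W : Finset B) → ({x // x ∈ W} → C) → ℝ}
    {rC : (d : Cons BB) → ({x // x ∈ tsupp d} → C) → ℝ}
    (h : IsSASolution k AA BB pV pC) (h' : IsSASolution k BB CC rV rC) :
    IsSASolution k AA CC (fun V => mixture (pV V) (pullWeight rV))
      (fun c => mixture (pC c) (pullConsWeight c rC)) where
  nonneg V hV hVk := mixture_nonneg (h.nonneg V hV hVk) (h'.pullWeight_nonneg hV hVk)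
  cons_nonneg c := mixture_nonneg (h.cons_nonneg c) (h'.pullConsWeight_nonneg c)
  sum_eq_one V hV hVk := by
    simp only [sum_mixture, h'.sum_pullWeight hV hVk, mul_one, h.sum_eq_one V hV hVk]
  cons_sum_le_one c := by
    rw [sum_mixture]
    refine (Finset.sum_le_sum fun φ _ => ?_).trans (h.cons_sum_le_one c)
    exact mul_le_of_le_one_right (h.cons_nonneg c φ) (h'.sum_pullConsWeight_le_one c φ)
  marginal U V hUV hU hVk := by
    rw [h.marginal U V hUV hU hVk, mixture_pushforward, pushforward_mixture]
    exact mixture_congr fun φ _ => h'.pullWeight_restrictTo hUV hU hVk φ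
  cons_marginal c U hUc hU hUk := by
    rw [h.cons_marginal c U hUc hU hUk, mixture_pushforward, pushforward_mixture]
    refine mixture_congr fun φ hφ => h'.pullWeight_restrictTo_tsupp hUc hU hUk ?_
    by_contra hmem
    exact hφ (h.cons_eq_zero c φ hmem)
  cons_eq_zero c f hf := Finset.sum_eq_zero fun φ _ => by
    rw [h'.pullConsWeight_eq_zero hf, mul_zero]

theorem SAfeasible.trans [Fintype B] [Fintype C]
    {AA : Struct σ ar A} {BB : Struct σ ar B} {CC : Struct σ ar C} (hk : 1 ≤ k)
    (h : SAfeasible k AA BB) (h' : SAfeasible k BB CC) : SAfeasible k AA CC := by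
  obtain ⟨pV, pC, hp⟩ := h.exists_isSASolution hk
  obtain ⟨rV, rC, hr⟩ := h'.exists_isSASolution hk
  exact (hp.comp hr).feasible

end SheraliAdams

section Equitable

variable {τ : Type} {art : τ → ℕ} {X Y : Type} {I J : Type*} {XX : Struct τ art X}
  {YY : Struct τ art Y} {pX : X → I} {qX : Cons XX → J} {pY : Y → I} {qY : Cons YY → J}
  {cpar : Label τ art → I → J → ℕ} {dpar : Label τ art → J → I → ℕ}

/-- The tuples of `R(YY)` whose constraint lies in the class `j` of the partition `qY`. -/
def classTuples (qY : Cons YY → J) (R : τ) (j : J) : Set (Fin (art R) → Y) :=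
  {u | ∃ hu : u ∈ YY.rel R, qY (Cons.mk hu) = j}

lemma lab_mk_eq_lab_iff {R : τ} {u : Fin (art R) → Y} {hu : u ∈ YY.rel R} {y : Y}
    {t : Fin (art R) → X} {ht : t ∈ XX.rel R} {x : X} :
    lab YY y (Cons.mk hu) = lab XX x (Cons.mk ht) ↔ ∀ i, u i = y ↔ t i = x := by
  change (⟨R, Finset.univ.filter fun i => u i = y⟩ : Label τ art) =
    ⟨R, Finset.univ.filter fun i => t i = x⟩ ↔ _
  simp [Finset.ext_iff]

lemma exists_eq_mk_of_lab_eq {R : τ} {t : Fin (art R) → X} {ht : t ∈ XX.rel R} {x : X} {y : Y}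
    {d : Cons YY} (h : lab YY y d = lab XX x (Cons.mk ht)) :
    ∃ (u : Fin (art R) → Y) (hu : u ∈ YY.rel R), d = Cons.mk hu := by
  obtain ⟨R', u, hu⟩ := d
  obtain rfl : R' = R := congrArg Sigma.fst h
  exact ⟨u, hu, rfl⟩

lemma IsEquitable.class_apply_and_lab_eq (hX : IsEquitable XX pX qX cpar dpar)
    (hY : IsEquitable YY pY qY cpar dpar) {R : τ} {t : Fin (art R) → X} (ht : t ∈ XX.rel R)
    {u : Fin (art R) → Y} (hu : u ∈ YY.rel R) (hq : qY (Cons.mk hu) = qX (Cons.mk ht))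
    (i : Fin (art R)) :
    pY (u i) = pX (t i) ∧ lab YY (u i) (Cons.mk hu) = lab XX (t i) (Cons.mk ht) := by
  set ℓ := lab XX (t i) (Cons.mk ht)
  have hunique : Nat.card {x // pX x = pX (t i) ∧ lab XX x (Cons.mk ht) = ℓ} = 1 := by
    refine Nat.card_eq_one_iff_exists.2 ⟨⟨t i, rfl, rfl⟩, fun x => Subtype.ext ?_⟩
    exact ((lab_mk_eq_lab_iff.1 x.2.2 i).2 rfl).symm
  rw [hX.2, ← hq, ← hY.2] at hunique
  obtain ⟨⟨y, hy, hlab⟩, -⟩ := Nat.card_eq_one_iff_exists.1 hunique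
  obtain rfl : u i = y := (lab_mk_eq_lab_iff.1 hlab i).2 rfl
  exact ⟨hy, hlab⟩

lemma IsEquitable.card_classTuples_fiber (hX : IsEquitable XX pX qX cpar dpar)
    (hY : IsEquitable YY pY qY cpar dpar) {R : τ} {t : Fin (art R) → X} (ht : t ∈ XX.rel R)
    (i : Fin (art R)) {y : Y} (hy : pY y = pX (t i)) :
    Nat.card {u : classTuples qY R (qX (Cons.mk ht)) // u.1 i = y} =
      cpar (lab XX (t i) (Cons.mk ht)) (pX (t i)) (qX (Cons.mk ht)) := by
  rw [← hy, ← hY.1]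
  refine Nat.card_eq_of_bijective (fun u => ⟨Cons.mk u.1.2.1, u.1.2.2, ?_⟩) ⟨?_, ?_⟩
  · obtain ⟨⟨u, hu, hq⟩, rfl⟩ := u
    exact (hX.class_apply_and_lab_eq hY ht hu hq i).2
  · intro u v huv
    exact Subtype.ext (Subtype.ext (Cons.mk_inj (congrArg Subtype.val huv)))
  · rintro ⟨d, hq, hlab⟩
    obtain ⟨u, hu, rfl⟩ := exists_eq_mk_of_lab_eq hlab
    exact ⟨⟨⟨u, hu, hq⟩, (lab_mk_eq_lab_iff.1 hlab i).2 rfl⟩, rfl⟩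

lemma finite_classTuples {R : τ} (hfin : (YY.rel R).Finite) (j : J) :
    Finite (classTuples qY R j) :=
  hfin.subset fun _ hu => hu.1

lemma IsEquitable.cpar_ne_zero (hX : IsEquitable XX pX qX cpar dpar) {R : τ}
    (hXfin : (XX.rel R).Finite) {t : Fin (art R) → X} (ht : t ∈ XX.rel R) (i : Fin (art R)) :
    cpar (lab XX (t i) (Cons.mk ht)) (pX (t i)) (qX (Cons.mk ht)) ≠ 0 := by
  have := finite_classTuples (qY := qX) hXfin (qX (Cons.mk ht))
  rw [← hX.card_classTuples_fiber hX ht i rfl]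
  exact Nat.card_ne_zero.2 ⟨⟨⟨t, ht, rfl⟩, rfl⟩, inferInstance⟩

lemma IsEquitable.exists_mem_classTuples (hX : IsEquitable XX pX qX cpar dpar)
    (hY : IsEquitable YY pY qY cpar dpar) {R : τ} (hXfin : (XX.rel R).Finite)
    {t : Fin (art R) → X} (ht : t ∈ XX.rel R) (i : Fin (art R)) {y : Y}
    (hy : pY y = pX (t i)) : ∃ u ∈ classTuples qY R (qX (Cons.mk ht)), u i = y := by
  have hne := hX.cpar_ne_zero hXfin ht i
  rw [← hX.card_classTuples_fiber hY ht i hy] at hne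
  obtain ⟨⟨u, hu⟩⟩ := (Nat.card_ne_zero.1 hne).1
  exact ⟨u.1, u.2, hu⟩

lemma IsEquitable.finite_class (hX : IsEquitable XX pX qX cpar dpar)
    (hY : IsEquitable YY pY qY cpar dpar) {R : τ} (hXfin : (XX.rel R).Finite)
    (hYfin : (YY.rel R).Finite) {t : Fin (art R) → X} (ht : t ∈ XX.rel R) (i : Fin (art R)) :
    Finite {y // pY y = pX (t i)} :=
  (hYfin.image fun u => u i).subset fun _ hy =>
    have ⟨u, hu, huy⟩ := hX.exists_mem_classTuples hY hXfin ht i hy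
    ⟨u, hu.1, huy⟩

lemma IsEquitable.law_class_eq_law_classTuples (hX : IsEquitable XX pX qX cpar dpar)
    (hY : IsEquitable YY pY qY cpar dpar) {R : τ} (hXfin : (XX.rel R).Finite)
    (hYfin : (YY.rel R).Finite) {t : Fin (art R) → X} (ht : t ∈ XX.rel R) (i : Fin (art R))
    {γ : Type*} (r : {y // pY y = pX (t i)} → γ) :
    law r = law fun u : classTuples qY R (qX (Cons.mk ht)) =>
      r ⟨u.1 i, (hX.class_apply_and_lab_eq hY ht u.2.1 u.2.2 i).1⟩ := by
  have := finite_classTuples (qY := qY) hYfin (qX (Cons.mk ht))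
  have := hX.finite_class hY hXfin hYfin ht i
  refine (law_comp_of_card_fiber (hX.cpar_ne_zero hXfin ht i) (fun y => ?_) r).symm
  simp only [← hX.card_classTuples_fiber hY ht i y.2, Subtype.ext_iff]

theorem IsEquitable.law_class_eq_law_class (hX : IsEquitable XX pX qX cpar dpar)
    (hY : IsEquitable YY pY qY cpar dpar) {R : τ} (hXfin : (XX.rel R).Finite)
    (hYfin : (YY.rel R).Finite) {t : Fin (art R) → X} (ht : t ∈ XX.rel R) (i j : Fin (art R))
    {γ : Type*} {r : {y // pY y = pX (t i)} → γ} {s : {y // pY y = pX (t j)} → γ}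
    (hrs : ∀ u ∈ YY.rel R, ∀ hi hj, r ⟨u i, hi⟩ = s ⟨u j, hj⟩) : law r = law s := by
  rw [hX.law_class_eq_law_classTuples hY hXfin hYfin ht i,
    hX.law_class_eq_law_classTuples hY hXfin hYfin ht j]
  exact congrArg law (funext fun u => hrs u.1 u.2.1 _ _)

end Equitable

section Star

variable {A B : Type} {k : ℕ} {AA : Struct σ ar A} {BB : Struct σ ar B}

lemma finite_starStruct_rel [Finite A] (AA : Struct σ ar A) (k : ℕ) (R : StarSym σ ar k) :
    ((starStruct AA k).rel R).Finite := by
  cases R with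
  | TS j S =>
    refine (Set.finite_range fun v : Fin (j.1 + 1) → A => fun _ => Sum.inl ⟨j, v⟩).subset ?_
    rintro _ ⟨v, -, rfl⟩
    exact ⟨v, rfl⟩
  | TI j j' iv =>
    refine (Set.finite_range fun v : Fin (j.1 + 1) → A =>
      ![Sum.inl ⟨j, v⟩, Sum.inl ⟨j', v ∘ iv⟩]).subset ?_
    rintro _ ⟨v, rfl⟩
    exact ⟨v, rfl⟩
  | RS R S =>
    refine (Set.finite_range fun v : AA.rel R => fun _ => Sum.inr ⟨R, v⟩).subset ?_
    rintro _ ⟨v, hv, -, rfl⟩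
    exact ⟨⟨v, hv⟩, rfl⟩
  | RI R j iv =>
    refine (Set.finite_range fun v : AA.rel R =>
      ![Sum.inr ⟨R, v⟩, Sum.inl ⟨j, v.1 ∘ iv⟩]).subset ?_
    rintro _ ⟨v, hv, rfl⟩
    exact ⟨⟨v, hv⟩, rfl⟩

/-- A tuple as an element of the universe of `AA*_k`. -/
def StarUniv.ofTuple {AA : Struct σ ar A} {j : Fin k} (v : Fin (j.1 + 1) → A) : StarUniv AA k :=
  Sum.inl ⟨j, v⟩

/-- A constraint as an element of the universe of `AA*_k`. -/
def StarUniv.ofCons (k : ℕ) (c : Cons AA) : StarUniv AA k :=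
  Sum.inr c

lemma StarUniv.ofTuple_injective {j : Fin k} :
    Function.Injective (StarUniv.ofTuple : (Fin (j.1 + 1) → A) → StarUniv AA k) :=
  fun _ _ h => eq_of_heq (Sigma.mk.inj (Sum.inl.inj h)).2

lemma StarUniv.ofCons_injective : Function.Injective (StarUniv.ofCons k : Cons AA → _) :=
  fun _ _ h => Sum.inr.inj h

/-- The index `j` for which the enumerations of `V` lie in the component `A^(j+1)` of the universe
of `AA*_k`. -/
def enumIndex {V : Finset A} (hV : V.Nonempty) (hVk : V.card ≤ k) : Fin k :=
  ⟨V.card - 1, by have := hV.card_pos; omega⟩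

/-- An enumeration of `V`, through which `V` is represented by a tuple in `AA*_k`. -/
def enum {V : Finset A} (hV : V.Nonempty) (hVk : V.card ≤ k) :
    Fin ((enumIndex hV hVk).1 + 1) ≃ {x // x ∈ V} :=
  (V.equivFinOfCardEq (Nat.sub_add_cancel hV.card_pos).symm).symm

/-- The element of `AA*_k` representing the set `V`. -/
def StarUniv.ofFinset (AA : Struct σ ar A) {V : Finset A} (hV : V.Nonempty) (hVk : V.card ≤ k) :
    StarUniv AA k :=
  .ofTuple fun i => (enum hV hVk i).1

end Star

section Decode

variable {A B : Type} {k : ℕ} {AA : Struct σ ar A} {BB : Struct σ ar B} {I J : Type*}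
  {pX : StarUniv AA k → I} {qX : Cons (starStruct AA k) → J}
  {pY : StarUniv BB k → I} {qY : Cons (starStruct BB k) → J}
  {cpar : Label (StarSym σ ar k) starAr → I → J → ℕ}
  {dpar : Label (StarSym σ ar k) starAr → J → I → ℕ}

lemma IsEquitable.exists_eq_ofTuple [Finite A]
    (hX : IsEquitable (starStruct AA k) pX qX cpar dpar)
    (hY : IsEquitable (starStruct BB k) pY qY cpar dpar) {j : Fin k} {v : Fin (j.1 + 1) → A}
    {y : StarUniv BB k} (hy : pY y = pX (.ofTuple v)) :
    ∃ w : Fin (j.1 + 1) → B, y = .ofTuple w := by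
  have ht : (fun _ => .ofTuple v) ∈ (starStruct AA k).rel (.TS j ∅) := ⟨v, by simp, rfl⟩
  obtain ⟨u, ⟨⟨w, -, rfl⟩, -⟩, rfl⟩ :=
    hX.exists_mem_classTuples hY (finite_starStruct_rel AA k _) ht (0 : Fin 1) hy
  exact ⟨w, rfl⟩

lemma IsEquitable.exists_eq_ofCons_of_forall_eq [Finite A]
    (hX : IsEquitable (starStruct AA k) pX qX cpar dpar)
    (hY : IsEquitable (starStruct BB k) pY qY cpar dpar) {c : Cons AA} {S : Finset (Fin (ar c.1))}
    (hS : ∀ i ∈ S, ∀ i' ∈ S, c.2.1 i = c.2.1 i')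
    {y : StarUniv BB k} (hy : pY y = pX (.ofCons k c)) :
    ∃ (w : Fin (ar c.1) → B) (hw : w ∈ BB.rel c.1),
      (∀ i ∈ S, ∀ i' ∈ S, w i = w i') ∧ y = .ofCons k (Cons.mk hw) := by
  have ht : (fun _ => .ofCons k c) ∈ (starStruct AA k).rel (.RS c.1 S) := ⟨c.2.1, c.2.2, hS, rfl⟩
  obtain ⟨u, ⟨⟨w, hw, hwS, rfl⟩, -⟩, rfl⟩ :=
    hX.exists_mem_classTuples hY (finite_starStruct_rel AA k _) ht (0 : Fin 1) hy
  exact ⟨w, hw, hwS, rfl⟩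

lemma IsEquitable.exists_eq_ofCons_comp [Finite A]
    (hX : IsEquitable (starStruct AA k) pX qX cpar dpar)
    (hY : IsEquitable (starStruct BB k) pY qY cpar dpar) {c : Cons AA}
    {y : StarUniv BB k} (hy : pY y = pX (.ofCons k c)) :
    ∃ (φ : {x // x ∈ tsupp c} → B) (hφ : (fun i => φ ⟨c.2.1 i, mem_tsupp c i⟩) ∈ BB.rel c.1),
      y = .ofCons k (Cons.mk hφ) := by
  obtain ⟨w, hw, -, rfl⟩ :=
    hX.exists_eq_ofCons_of_forall_eq hY (S := ∅) (by simp) hy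
  have hker : ∀ i i', c.2.1 i = c.2.1 i' → w i = w i' := by
    intro i i' hii'
    obtain ⟨w', hw', hS, heq⟩ :=
      hX.exists_eq_ofCons_of_forall_eq hY (S := {i, i'}) (by simp [hii']) hy
    obtain rfl : w = w' := Cons.mk_inj (StarUniv.ofCons_injective heq)
    exact hS i (by simp) i' (by simp)
  have hex : ∀ a : {x // x ∈ tsupp c}, ∃ i, c.2.1 i = a.1 := fun a => by
    simpa [tsupp] using a.2
  choose idx hidx using hex
  obtain ⟨φ, rfl⟩ : ∃ φ : {x // x ∈ tsupp c} → B, w = fun i => φ ⟨c.2.1 i, mem_tsupp c i⟩ :=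
    ⟨fun a => w (idx a), funext fun i => hker _ _ (hidx ⟨_, mem_tsupp c i⟩).symm⟩
  exact ⟨φ, hw, rfl⟩

lemma IsEquitable.exists_eq_ofFinset_comp [Finite A]
    (hX : IsEquitable (starStruct AA k) pX qX cpar dpar)
    (hY : IsEquitable (starStruct BB k) pY qY cpar dpar) {V : Finset A} (hV : V.Nonempty)
    (hVk : V.card ≤ k) {y : StarUniv BB k} (hy : pY y = pX (.ofFinset AA hV hVk)) :
    ∃ φ : {x // x ∈ V} → B, y = .ofTuple (φ ∘ enum hV hVk) := by
  obtain ⟨w, rfl⟩ := hX.exists_eq_ofTuple hY hy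
  exact ⟨w ∘ (enum hV hVk).symm, by simp [Function.comp_assoc]⟩

lemma IsEquitable.finite_class_ofFinset [Finite A] [Finite B]
    (hX : IsEquitable (starStruct AA k) pX qX cpar dpar)
    (hY : IsEquitable (starStruct BB k) pY qY cpar dpar) {V : Finset A} (hV : V.Nonempty)
    (hVk : V.card ≤ k) : Finite {y // pY y = pX (.ofFinset AA hV hVk)} :=
  have ht : (fun _ => .ofFinset AA hV hVk) ∈ (starStruct AA k).rel (.TS (enumIndex hV hVk) ∅) :=
    ⟨_, by simp, rfl⟩
  hX.finite_class hY (finite_starStruct_rel AA k _) (finite_starStruct_rel BB k _) ht (0 : Fin 1)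

lemma IsEquitable.finite_class_ofCons [Finite A] [Finite B]
    (hX : IsEquitable (starStruct AA k) pX qX cpar dpar)
    (hY : IsEquitable (starStruct BB k) pY qY cpar dpar) (c : Cons AA) :
    Finite {y // pY y = pX (.ofCons k c)} :=
  have ht : (fun _ => .ofCons k c) ∈ (starStruct AA k).rel (.RS c.1 ∅) :=
    ⟨c.2.1, c.2.2, by simp, rfl⟩
  hX.finite_class hY (finite_starStruct_rel AA k _) (finite_starStruct_rel BB k _) ht (0 : Fin 1)

lemma IsEquitable.law_ofFinset_eq_pushforward [Finite A] [Fintype B]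
    (hX : IsEquitable (starStruct AA k) pX qX cpar dpar)
    (hY : IsEquitable (starStruct BB k) pY qY cpar dpar) {U V : Finset A} (hUV : U ⊆ V)
    (hU : U.Nonempty) (hUk : U.card ≤ k) (hV : V.Nonempty) (hVk : V.card ≤ k)
    {φ : {y // pY y = pX (.ofFinset AA hU hUk)} → {x // x ∈ U} → B}
    (hφ : ∀ y : {y // pY y = _}, y.1 = .ofTuple (φ y ∘ enum hU hUk))
    {ψ : {y // pY y = pX (.ofFinset AA hV hVk)} → {x // x ∈ V} → B}
    (hψ : ∀ y : {y // pY y = _}, y.1 = .ofTuple (ψ y ∘ enum hV hVk)) :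
    law φ = pushforward (restrictTo hUV) (law ψ) := by
  have := hX.finite_class_ofFinset hY hV hVk
  let iv i := (enum hV hVk).symm ⟨(enum hU hUk i).1, hUV (enum hU hUk i).2⟩
  have hiv (i) : enum hV hVk (iv i) = ⟨(enum hU hUk i).1, hUV (enum hU hUk i).2⟩ :=
    (enum hV hVk).apply_symm_apply _
  have hcomp : (fun i => (enum hU hUk i).1) = (fun i => (enum hV hVk i).1) ∘ iv :=
    funext fun i => (congrArg Subtype.val (hiv i)).symm
  have ht : ![.ofFinset AA hV hVk, .ofFinset AA hU hUk] ∈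
      (starStruct AA k).rel (.TI (enumIndex hV hVk) (enumIndex hU hUk) iv) :=
    ⟨_, by rw [← hcomp]; rfl⟩
  rw [pushforward_law]
  refine hX.law_class_eq_law_class hY (finite_starStruct_rel AA k _)
    (finite_starStruct_rel BB k _) ht (1 : Fin 2) (0 : Fin 2) ?_
  rintro _ ⟨w, rfl⟩ h₁ h₀
  have hw : w = ψ ⟨_, h₀⟩ ∘ enum hV hVk := StarUniv.ofTuple_injective (hψ ⟨_, h₀⟩)
  have hwiv : w ∘ iv = φ ⟨_, h₁⟩ ∘ enum hU hUk := StarUniv.ofTuple_injective (hφ ⟨_, h₁⟩)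
  refine (enum hU hUk).surjective.injective_comp_right (hwiv.symm.trans (funext fun i => ?_))
  exact (congrFun hw (iv i)).trans (congrArg (ψ ⟨_, h₀⟩) (hiv i))

lemma IsEquitable.law_ofFinset_eq_pushforward_tsupp [Finite A] [Fintype B]
    (hX : IsEquitable (starStruct AA k) pX qX cpar dpar)
    (hY : IsEquitable (starStruct BB k) pY qY cpar dpar) {c : Cons AA} {U : Finset A}
    (hUc : U ⊆ tsupp c) (hU : U.Nonempty) (hUk : U.card ≤ k)
    {φ : {y // pY y = pX (.ofFinset AA hU hUk)} → {x // x ∈ U} → B}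
    (hφ : ∀ y : {y // pY y = _}, y.1 = .ofTuple (φ y ∘ enum hU hUk))
    {ψ : {y // pY y = pX (.ofCons k c)} → {x // x ∈ tsupp c} → B}
    (hψmem : ∀ y : {y // pY y = _}, (fun i => ψ y ⟨c.2.1 i, mem_tsupp c i⟩) ∈ BB.rel c.1)
    (hψ : ∀ y : {y // pY y = _}, y.1 = .ofCons k (Cons.mk (hψmem y))) :
    law φ = pushforward (restrictTo hUc) (law ψ) := by
  have := hX.finite_class_ofCons hY c
  have hex (i) : ∃ l, c.2.1 l = (enum hU hUk i).1 := by
    simpa [tsupp] using hUc (enum hU hUk i).2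
  choose iv hiv using hex
  have ht : ![.ofCons k c, .ofFinset AA hU hUk] ∈
      (starStruct AA k).rel (.RI c.1 (enumIndex hU hUk) iv) :=
    ⟨c.2.1, c.2.2, by rw [show c.2.1 ∘ iv = _ from funext hiv]; rfl⟩
  rw [pushforward_law]
  refine hX.law_class_eq_law_class hY (finite_starStruct_rel AA k _)
    (finite_starStruct_rel BB k _) ht (1 : Fin 2) (0 : Fin 2) ?_
  rintro _ ⟨w, hw, rfl⟩ h₁ h₀
  have hwψ : w = fun i => ψ ⟨_, h₀⟩ ⟨c.2.1 i, mem_tsupp c i⟩ :=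
    Cons.mk_inj (StarUniv.ofCons_injective (hψ ⟨_, h₀⟩))
  have hwiv : w ∘ iv = φ ⟨_, h₁⟩ ∘ enum hU hUk := StarUniv.ofTuple_injective (hφ ⟨_, h₁⟩)
  refine (enum hU hUk).surjective.injective_comp_right (hwiv.symm.trans (funext fun i => ?_))
  exact (congrFun hwψ (iv i)).trans (congrArg (ψ ⟨_, h₀⟩) (Subtype.ext (hiv i)))

theorem EquivK.saFeasible [Finite A] [Fintype B] (h : EquivK k AA BB) : SAfeasible k AA BB := by
  obtain ⟨I, J, pX, qX, pY, qY, cpar, dpar, hX, hY, hcard, -⟩ := h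
  choose φ hφ using fun V hV hVk (y : {y // pY y = pX (.ofFinset AA (V := V) hV hVk)}) =>
    hX.exists_eq_ofFinset_comp hY hV hVk y.2
  choose ψ hψmem hψ using fun c (y : {y // pY y = pX (.ofCons k c)}) =>
    hX.exists_eq_ofCons_comp hY y.2
  let pV (V : Finset A) : ({x // x ∈ V} → B) → ℝ :=
    if h : V.Nonempty ∧ V.card ≤ k then law (φ V h.1 h.2) else 0
  have hpV {V : Finset A} (hV : V.Nonempty) (hVk : V.card ≤ k) : pV V = law (φ V hV hVk) :=
    dif_pos ⟨hV, hVk⟩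
  refine IsSASolution.feasible (pV := pV) (pC := fun c => law (ψ c))
    ⟨fun V hV hVk f => ?_, fun c f => law_nonneg _ _, fun V hV hVk => ?_, fun c => ?_,
      fun U V hUV hU hVk => ?_, fun c U hUc hU hUk => ?_, fun c f hf => ?_⟩
  · rw [hpV hV hVk]
    exact law_nonneg _ _
  · have := hX.finite_class_ofFinset hX hV hVk
    have := hX.finite_class_ofFinset hY hV hVk
    have hne : Nat.card {y // pY y = pX (.ofFinset AA hV hVk)} ≠ 0 := by
      rw [← hcard]
      exact Nat.card_ne_zero.2 ⟨⟨⟨_, rfl⟩⟩, inferInstance⟩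
    rw [hpV hV hVk, sum_law, div_self (Nat.cast_ne_zero.2 hne)]
  · have := hX.finite_class_ofCons hY c
    rw [sum_law]
    exact div_self_le_one _
  · have hV := hU.mono hUV
    have hUk := (Finset.card_le_card hUV).trans hVk
    rw [hpV hU hUk, hpV hV hVk]
    exact hX.law_ofFinset_eq_pushforward hY hUV hU hUk hV hVk (hφ U hU hUk) (hφ V hV hVk)
  · rw [hpV hU hUk]
    exact hX.law_ofFinset_eq_pushforward_tsupp hY hUc hU hUk (hφ U hU hUk) (hψmem c) (hψ c)
  · exact law_eq_zero fun y hy => hf (hy ▸ hψmem c y)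

end Decode

lemma EquivK.symm {A B : Type} {k : ℕ} {AA : Struct σ ar A} {BB : Struct σ ar B}
    (h : EquivK k AA BB) : EquivK k BB AA := by
  obtain ⟨I, J, pX, qX, pY, qY, cpar, dpar, hX, hY, hp, hq⟩ := h
  exact ⟨I, J, pY, qY, pX, qX, cpar, dpar, hY, hX, fun i => (hp i).symm, fun j => (hq j).symm⟩

theorem stmt11_general {A A' B : Type} [Finite A] [Finite A'] [Fintype B] {k : ℕ} (hk : 1 ≤ k)
    {AA : Struct σ ar A} {AA' : Struct σ ar A'} {BB : Struct σ ar B} (h : EquivK k AA AA') :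
    SAfeasible k AA BB ↔ SAfeasible k AA' BB := by
  cases nonempty_fintype A
  cases nonempty_fintype A'
  exact ⟨h.symm.saFeasible.trans hk, h.saFeasible.trans hk⟩

theorem stmt11 [Fintype σ] {A A' B : Type} [Fintype A] [Fintype A'] [Fintype B]
    (k : ℕ) (hk : 1 ≤ k)
    (AA : Struct σ ar A) (AA' : Struct σ ar A') (BB : Struct σ ar B)
    (h : EquivK k AA AA') :
    SAfeasible k AA BB ↔ SAfeasible k AA' BB :=
  stmt11_general hk h

end
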